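/- Let n > m ≥ 1 be integers. Let ν be the product measure on (ℝ × ℝ)^{m+1} whose k-th factor is N(0, (1/2)binom(m,k)) ⊗ N(0, (1/2)binom(m,k)), governing coefficients ((a_k, b_k))_{k=0}^m, and let q(z) = Σ_{k=0}^m (a_k + i b_k) z^k. For every ε₀ > 0 there exists ε₁ > 0 such that for all 0 < ε ≤ ε₁, the expected total number of zeros of the harmonic polynomial ε z^n + q(z) + conj(q(z)), i.e. ∫ (cardinality of {z ∈ ℂ : ε z^n + q(z) + conj(q(z)) = 0}) dν, is at least n·(√m − ε₀). -/

import Mathlib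

open MeasureTheory ProbabilityTheory Complex
open scoped NNReal

/-!
The zeros of `ε z ^ n + q(z) + conj (q(z))` lie on the `2n` rays through the `2n`-th roots of unity
`ζ`, where the function is `± ε r ^ n + 2 Re q(r ζ)`. The proof bounds the number of zeros from
below by the number of sign changes along a fixed finite grid of radii on these rays, so neither
a Kac–Rice formula nor a limit of zero counts is needed.

With `r = tan φ`, the Gaussian process `2 Re q(r ζ)`, normalised to unit variance, has correlation
`cos ^ m (φ - ψ)` (`isGaussPair_ray`). The step `δ` of the grid in `φ` is chosen such that
`cos ^ m δ = cos (π / N)`. A centred Gaussian pair with correlation `cos (π / N)` has opposite signs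
with probability at least `1 / N` (`IsGaussPair.inv_le_measureReal`): rotating by `π / N` repeatedly
joins `X` to `-X` in `N` steps, all having the same sign change probability, and one of them must
change the sign. About `π / (2 δ)` steps fit into each ray, so the `2n` rays give at least about
`n π / (N δ)` expected sign changes, and `π / (N δ) → √m` as `N → ∞` (`exists_grid`).

Up to a small loss of probability the sign changes have size at least some `η > 0`
(`exists_robust`) and therefore survive the perturbation `± ε r ^ n` for small `ε`; by the
intermediate value theorem they yield distinct zeros (`card_le_ncard`). Finally the number of zeros
is bounded by `2 n ^ 2` (`ncard_zeroSet_le`) and measurable (`measurable_ncard_zeros`), so its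
Bochner integral is the true expectation.
-/

/-! ### Sign changes of Gaussian pairs -/

/-- `X` and `Y` are jointly Gaussian, centred, of unit variance and with covariance `cos θ`,
expressed through the joint characteristic function. -/
def IsGaussPair {Ω : Type*} [MeasurableSpace Ω] (P : Measure Ω) (X Y : Ω → ℝ) (θ : ℝ) : Prop :=
  ∀ a b : ℝ, ∫ ω, Complex.exp (((a * X ω + b * Y ω : ℝ) : ℂ) * I) ∂P =
    Complex.exp ((-(a ^ 2 + b ^ 2 + 2 * a * b * Real.cos θ) / 2 : ℝ) : ℂ)

/-- The joint law of such a pair depends only on `θ`. -/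
lemma IsGaussPair.map_eq {Ω : Type*} [MeasurableSpace Ω] {P : Measure Ω} [IsProbabilityMeasure P]
    {X Y X' Y' : Ω → ℝ} {θ : ℝ} (hX : Measurable X) (hY : Measurable Y) (hX' : Measurable X')
    (hY' : Measurable Y') (h : IsGaussPair P X Y θ) (h' : IsGaussPair P X' Y' θ) :
    P.map (fun ω => (X ω, Y ω)) = P.map (fun ω => (X' ω, Y' ω)) := by
  have hm : Measurable (fun ω => (X ω, Y ω)) := hX.prodMk hY
  have hm' : Measurable (fun ω => (X' ω, Y' ω)) := hX'.prodMk hY'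
  have := Measure.isProbabilityMeasure_map (μ := P) hm.aemeasurable
  have := Measure.isProbabilityMeasure_map (μ := P) hm'.aemeasurable
  refine Measure.ext_of_charFunDual (funext fun L => ?_)
  have hL : ∀ x y : ℝ, L (x, y) = L (1, 0) * x + L (0, 1) * y := by
    intro x y
    have : ((x, y) : ℝ × ℝ) = x • (1, 0) + y • (0, 1) := by simp
    rw [this, map_add, map_smul, map_smul, smul_eq_mul, smul_eq_mul]; ring
  have hc : Measurable fun v : ℝ × ℝ => Complex.exp ((L v : ℂ) * I) := by fun_prop
  rw [charFunDual_apply, charFunDual_apply, integral_map hm.aemeasurable hc.aestronglyMeasurable,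
    integral_map hm'.aemeasurable hc.aestronglyMeasurable]
  have e1 := h (L (1, 0)) (L (0, 1))
  rw [← h' (L (1, 0)) (L (0, 1))] at e1
  simpa only [← hL] using e1

lemma IsGaussPair.measure_eq_zero {Ω : Type*} [MeasurableSpace Ω] {P : Measure Ω}
    [IsProbabilityMeasure P] {X Y : Ω → ℝ} {θ : ℝ} (hX : Measurable X)
    (h : IsGaussPair P X Y θ) : P {ω | X ω = 0} = 0 := by
  have := Measure.isProbabilityMeasure_map (μ := P) hX.aemeasurable
  have hmap : P.map X = gaussianReal 0 1 := by
    refine Measure.ext_of_charFun (funext fun t => ?_)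
    have hc : Measurable fun x : ℝ => Complex.exp ((t : ℂ) * x * I) := by fun_prop
    rw [charFun_gaussianReal, charFun_apply_real,
      integral_map hX.aemeasurable hc.aestronglyMeasurable]
    have := h t 0
    simp only [zero_mul, add_zero] at this
    rw [show (fun ω => Complex.exp ((t : ℂ) * (X ω : ℂ) * I)) =
      fun ω => Complex.exp (((t * X ω : ℝ) : ℂ) * I) by ext; push_cast; rfl, this]
    congr 1
    push_cast
    ring
  have h0 : P.map X {0} = 0 := by
    rw [hmap]
    have := nullSingletonClass_gaussianReal (μ := 0) (v := 1) one_ne_zero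
    exact measure_singleton 0
  rwa [Measure.map_apply hX (measurableSet_singleton 0)] at h0

/-- In a chain of reals starting and ending with opposite signs and avoiding zero, two
consecutive terms have opposite signs. -/
lemma exists_sign_change (N : ℕ) (z : ℕ → ℝ) (hz : ∀ j ≤ N, z j ≠ 0) (h : z 0 * z N < 0) :
    ∃ j < N, z j * z (j + 1) < 0 := by
  by_contra! hcon
  have key : ∀ j ≤ N, 0 < z 0 * z j := by
    intro j
    induction j with
    | zero => intro _; exact mul_self_pos.2 (hz 0 (Nat.zero_le _))
    | succ j ih =>
      intro hj
      have h1 := ih (by omega)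
      have h2 : 0 < z j * z (j + 1) :=
        lt_of_le_of_ne (hcon j (by omega)) (mul_ne_zero (hz j (by omega)) (hz _ hj)).symm
      have h3 : 0 < z j ^ 2 := by have := hz j (by omega); positivity
      have h4 : 0 < (z 0 * z (j + 1)) * z j ^ 2 := by nlinarith [mul_pos h1 h2]
      exact pos_of_mul_pos_left h4 h3.le
  exact absurd (key N le_rfl) (not_lt.2 h.le)

/-- A Gaussian pair at angle `π / N` has opposite signs with probability at least `1 / N`.
The pair starts a chain `Z₀ = X, Z₁ = Y, …, Z_N = -X` obtained by rotating by `π / N` each time;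
consecutive terms all have the same joint law, and the chain must change sign somewhere. -/
lemma IsGaussPair.inv_le_measureReal {Ω : Type*} [MeasurableSpace Ω] {P : Measure Ω}
    [IsProbabilityMeasure P] {X Y : Ω → ℝ} {N : ℕ} (hN : 2 ≤ N) (hX : Measurable X)
    (hY : Measurable Y) (h : IsGaussPair P X Y (Real.pi / N)) :
    (1 : ℝ) / N ≤ P.real {ω | X ω * Y ω < 0} := by
  set x : ℝ := Real.pi / N with hx
  have hN0 : (0 : ℝ) < N := by positivity
  have hsin : 0 < Real.sin x := by
    apply Real.sin_pos_of_pos_of_lt_pi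
    · positivity
    · rw [hx, div_lt_iff₀ hN0]
      have : (2 : ℝ) ≤ N := by exact_mod_cast hN
      nlinarith [Real.pi_pos]
  -- `V` completes `X` to an orthonormal pair with `Y = cos x • X + sin x • V`.
  set V : Ω → ℝ := fun ω => (Y ω - Real.cos x * X ω) / Real.sin x with hV
  set Z : ℕ → Ω → ℝ := fun j ω => Real.cos (j * x) * X ω + Real.sin (j * x) * V ω with hZ
  have hVm : Measurable V := by fun_prop
  have hZm : ∀ j, Measurable (Z j) := fun j => by fun_prop
  have hZ0 : Z 0 = X := by ext ω; simp [hZ]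
  have hZN : ∀ ω, Z N ω = - X ω := by
    intro ω
    have : (N : ℝ) * x = Real.pi := by rw [hx]; field_simp
    simp [hZ, this]
  have hpair : ∀ j, IsGaussPair P (Z j) (Z (j + 1)) x := by
    intro j a b
    set p := a * Real.cos (j * x) + b * Real.cos ((j + 1 : ℕ) * x) with hp
    set q := a * Real.sin (j * x) + b * Real.sin ((j + 1 : ℕ) * x) with hq
    have e1 : ∀ ω, a * Z j ω + b * Z (j + 1) ω =
        (p - q * Real.cos x / Real.sin x) * X ω + (q / Real.sin x) * Y ω := by
      intro ω
      simp only [hZ, hV, hp, hq]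
      field_simp
      ring
    simp only [e1]
    rw [h]
    congr 2
    have hpq : p ^ 2 + q ^ 2 = a ^ 2 + b ^ 2 + 2 * a * b * Real.cos x := by
      have e2 : Real.cos x = Real.cos ((j + 1 : ℕ) * x) * Real.cos (j * x) +
          Real.sin ((j + 1 : ℕ) * x) * Real.sin (j * x) := by
        rw [← Real.cos_sub]; congr 1; push_cast; ring
      rw [e2, hp, hq]
      have s1 := Real.sin_sq_add_cos_sq (j * x)
      have s2 := Real.sin_sq_add_cos_sq ((j + 1 : ℕ) * x)
      linear_combination a ^ 2 * s1 + b ^ 2 * s2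
    rw [← hpq]
    congr 2
    have s := Real.sin_sq_add_cos_sq x
    field_simp
    linear_combination (-q ^ 2) * s
  have heq : ∀ j, P {ω | Z j ω * Z (j + 1) ω < 0} = P {ω | X ω * Y ω < 0} := by
    intro j
    have hms : MeasurableSet {v : ℝ × ℝ | v.1 * v.2 < 0} :=
      measurableSet_lt (by fun_prop) measurable_const
    have e := (hpair j).map_eq (hZm j) (hZm _) hX hY h
    have e' := congrArg (fun μ => μ {v : ℝ × ℝ | v.1 * v.2 < 0}) e
    rw [Measure.map_apply ((hZm j).prodMk (hZm _)) hms, Measure.map_apply (hX.prodMk hY) hms] at e'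
    exact e'
  have hne : ∀ᵐ ω ∂P, ∀ j, Z j ω ≠ 0 :=
    ae_all_iff.2 fun j => by
      rw [ae_iff]
      simpa using (hpair j).measure_eq_zero (hZm j)
  have hcover : ∀ᵐ ω ∂P, ω ∈ ⋃ j ∈ Finset.range N, {ω | Z j ω * Z (j + 1) ω < 0} := by
    filter_upwards [hne] with ω hω
    have h0 : Z 0 ω * Z N ω < 0 := by
      have h00 := hω 0
      rw [hZN, hZ0] at *
      have : 0 < X ω ^ 2 := by positivity
      nlinarith
    obtain ⟨j, hj, hj'⟩ := exists_sign_change N (fun j => Z j ω) (fun j _ => hω j) h0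
    simp only [Set.mem_iUnion]
    exact ⟨j, Finset.mem_range.2 hj, hj'⟩
  have h1 : P.real (⋃ j ∈ Finset.range N, {ω | Z j ω * Z (j + 1) ω < 0}) = 1 := by
    have e := measure_congr (Filter.eventuallyEq_univ.2 hcover)
    rw [Set.ofPred_mem_eq, measure_univ] at e
    rw [measureReal_def, e, ENNReal.toReal_one]
  have h2 := measureReal_biUnion_finset_le (μ := P) (Finset.range N)
    (fun j => {ω | Z j ω * Z (j + 1) ω < 0})
  rw [h1] at h2
  simp only [measureReal_def, heq, Finset.sum_const, Finset.card_range, nsmul_eq_mul] at h2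
  rw [div_le_iff₀ hN0, measureReal_def]
  linarith

/-! ### Kostlan coefficients and the process on a ray -/

/-- The law of the coefficients `((a_k, b_k))_k` of a Kostlan polynomial of degree `m`. -/
noncomputable abbrev kostlan (m : ℕ) : Measure (Fin (m + 1) → ℝ × ℝ) :=
  Measure.pi fun k : Fin (m + 1) =>
    (gaussianReal 0 ((m.choose k : ℝ≥0) / 2)).prod (gaussianReal 0 ((m.choose k : ℝ≥0) / 2))

/-- The joint characteristic function of the coefficients. -/
lemma integral_exp_kostlan (m : ℕ) (u w : Fin (m + 1) → ℝ) :
    ∫ c, Complex.exp (((∑ k, (u k * (c k).1 + w k * (c k).2) : ℝ) : ℂ) * I) ∂(kostlan m) =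
      Complex.exp ((-(∑ k : Fin (m + 1), (m.choose k : ℝ) / 2 * (u k ^ 2 + w k ^ 2)) / 2 : ℝ) : ℂ) := by
  have e : ∀ c : Fin (m + 1) → ℝ × ℝ,
      Complex.exp (((∑ k, (u k * (c k).1 + w k * (c k).2) : ℝ) : ℂ) * I) =
      ∏ k, (Complex.exp ((u k : ℂ) * (c k).1 * I) * Complex.exp ((w k : ℂ) * (c k).2 * I)) := by
    intro c
    simp_rw [← Complex.exp_add]
    rw [← Complex.exp_sum]
    congr 1
    push_cast
    rw [Finset.sum_mul]
    exact Finset.sum_congr rfl fun k _ => by ring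
  simp_rw [e]
  rw [integral_fintype_prod_eq_prod (f := fun (k : Fin (m + 1)) (p : ℝ × ℝ) =>
    Complex.exp ((u k : ℂ) * p.1 * I) * Complex.exp ((w k : ℂ) * p.2 * I))]
  have e2 : ∀ k : Fin (m + 1), ∫ p : ℝ × ℝ,
      Complex.exp ((u k : ℂ) * p.1 * I) * Complex.exp ((w k : ℂ) * p.2 * I)
      ∂((gaussianReal 0 ((m.choose k : ℝ≥0) / 2)).prod
        (gaussianReal 0 ((m.choose k : ℝ≥0) / 2))) =
      Complex.exp (-((m.choose k : ℂ) / 2 * ((u k : ℂ) ^ 2 + (w k : ℂ) ^ 2)) / 2) := by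
    intro k
    rw [integral_prod_mul (fun x : ℝ => Complex.exp ((u k : ℂ) * x * I))
      (fun x : ℝ => Complex.exp ((w k : ℂ) * x * I)), ← charFun_apply_real, ← charFun_apply_real,
      charFun_gaussianReal, charFun_gaussianReal, ← Complex.exp_add]
    congr 1
    push_cast
    ring
  simp_rw [e2]
  rw [← Complex.exp_sum]
  congr 1
  push_cast
  rw [← Finset.sum_div, ← Finset.sum_neg_distrib]

/-- The random function `r ↦ 2 Re q(r ζ)`, written out as a linear form in the coefficients. -/
noncomputable def ray {m : ℕ} (ζ : ℂ) (r : ℝ) (c : Fin (m + 1) → ℝ × ℝ) : ℝ :=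
  ∑ k : Fin (m + 1), 2 * r ^ (k : ℕ) * ((ζ ^ (k : ℕ)).re * (c k).1 - (ζ ^ (k : ℕ)).im * (c k).2)

lemma measurable_ray {m : ℕ} (ζ : ℂ) (r : ℝ) : Measurable (ray (m := m) ζ r) := by
  unfold ray; fun_prop

lemma sum_choose_mul_sq (m : ℕ) (A B r s : ℝ) :
    ∑ k : Fin (m + 1), (m.choose k : ℝ) / 2 * (A * r ^ (k : ℕ) + B * s ^ (k : ℕ)) ^ 2 =
      (A ^ 2 * (1 + r ^ 2) ^ m + 2 * A * B * (1 + r * s) ^ m + B ^ 2 * (1 + s ^ 2) ^ m) / 2 := by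
  have hb : ∀ t : ℝ, (1 + t) ^ m = ∑ k : Fin (m + 1), (m.choose k : ℝ) * t ^ (k : ℕ) := by
    intro t
    rw [add_comm, add_pow, Finset.sum_range]
    exact Finset.sum_congr rfl fun k _ => by simp [mul_comm]
  rw [hb, hb, hb, Finset.mul_sum, Finset.mul_sum, Finset.mul_sum, ← Finset.sum_add_distrib,
    ← Finset.sum_add_distrib, Finset.sum_div]
  refine Finset.sum_congr rfl fun k _ => ?_
  rw [mul_pow, ← pow_mul, ← pow_mul, mul_comm 2 (k : ℕ), pow_mul, pow_mul]
  ring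

/-- In the angular variable `r = tan φ` the normalised restriction of `q` to a ray is a stationary
Gaussian process with correlation `cos ^ m (ψ - φ)`. -/
lemma isGaussPair_ray {m : ℕ} {ζ : ℂ} (hζ : ‖ζ‖ = 1) {φ ψ θ : ℝ} (hφ : 0 < Real.cos φ)
    (hψ : 0 < Real.cos ψ) (h : Real.cos (ψ - φ) ^ m = Real.cos θ) :
    IsGaussPair (kostlan m) (fun c => Real.cos φ ^ m / √2 * ray ζ (Real.tan φ) c)
      (fun c => Real.cos ψ ^ m / √2 * ray ζ (Real.tan ψ) c) θ := by
  intro a b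
  set A := a * (Real.cos φ ^ m / √2) * 2 with hA
  set B := b * (Real.cos ψ ^ m / √2) * 2 with hB
  have e : ∀ c : Fin (m + 1) → ℝ × ℝ, a * (Real.cos φ ^ m / √2 * ray ζ (Real.tan φ) c) +
      b * (Real.cos ψ ^ m / √2 * ray ζ (Real.tan ψ) c) =
      ∑ k : Fin (m + 1), (((A * Real.tan φ ^ (k : ℕ) + B * Real.tan ψ ^ (k : ℕ)) *
        (ζ ^ (k : ℕ)).re) * (c k).1 + (-((A * Real.tan φ ^ (k : ℕ) +
          B * Real.tan ψ ^ (k : ℕ)) * (ζ ^ (k : ℕ)).im)) * (c k).2) := by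
    intro c
    simp only [ray, Finset.mul_sum, ← Finset.sum_add_distrib]
    exact Finset.sum_congr rfl fun k _ => by rw [hA, hB]; ring
  simp only [e]
  rw [integral_exp_kostlan m (fun k => (A * Real.tan φ ^ (k : ℕ) + B * Real.tan ψ ^ (k : ℕ)) *
        (ζ ^ (k : ℕ)).re) (fun k => -((A * Real.tan φ ^ (k : ℕ) +
          B * Real.tan ψ ^ (k : ℕ)) * (ζ ^ (k : ℕ)).im))]
  have hk : ∀ k : ℕ, (ζ ^ k).re ^ 2 + (ζ ^ k).im ^ 2 = 1 := by
    intro k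
    have : ‖ζ ^ k‖ ^ 2 = 1 := by rw [norm_pow, hζ]; simp
    rw [Complex.sq_norm, Complex.normSq_apply] at this
    linarith
  have e2 : ∀ k : Fin (m + 1), ((A * Real.tan φ ^ (k : ℕ) + B * Real.tan ψ ^ (k : ℕ)) *
        (ζ ^ (k : ℕ)).re) ^ 2 + (-((A * Real.tan φ ^ (k : ℕ) +
          B * Real.tan ψ ^ (k : ℕ)) * (ζ ^ (k : ℕ)).im)) ^ 2 =
      (A * Real.tan φ ^ (k : ℕ) + B * Real.tan ψ ^ (k : ℕ)) ^ 2 := by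
    intro k
    linear_combination (A * Real.tan φ ^ (k : ℕ) + B * Real.tan ψ ^ (k : ℕ)) ^ 2 * hk k
  simp only [e2]
  rw [sum_choose_mul_sq]
  congr 3
  have t1 : ∀ α : ℝ, 0 < Real.cos α → 1 + Real.tan α ^ 2 = 1 / Real.cos α ^ 2 := by
    intro α hα
    rw [Real.tan_eq_sin_div_cos]
    field_simp
    linarith [Real.sin_sq_add_cos_sq α]
  have t2 : 1 + Real.tan φ * Real.tan ψ = Real.cos (ψ - φ) / (Real.cos φ * Real.cos ψ) := by
    rw [Real.tan_eq_sin_div_cos, Real.tan_eq_sin_div_cos, Real.cos_sub]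
    field_simp
  rw [t1 φ hφ, t1 ψ hψ, t2, div_pow, div_pow, div_pow, h, hA, hB]
  have h2 : √(2 : ℝ) ^ 2 = 2 := Real.sq_sqrt (by norm_num)
  simp only [one_pow, mul_pow, div_pow, h2]
  field_simp
  rw [h2]
  ring

lemma ray_sign_change {m N : ℕ} (hN : 2 ≤ N) {ζ : ℂ} (hζ : ‖ζ‖ = 1) {φ ψ : ℝ}
    (hφ : 0 < Real.cos φ) (hψ : 0 < Real.cos ψ)
    (h : Real.cos (ψ - φ) ^ m = Real.cos (Real.pi / N)) :
    (1 : ℝ) / N ≤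
      (kostlan m).real {c | ray ζ (Real.tan φ) c * ray ζ (Real.tan ψ) c < 0} := by
  have := (isGaussPair_ray hζ hφ hψ h).inv_le_measureReal hN
    ((measurable_ray _ _).const_mul _) ((measurable_ray _ _).const_mul _)
  refine this.trans_eq ?_
  congr 1
  ext c
  simp only [Set.mem_ofPred_eq]
  have hp : 0 < (Real.cos φ ^ m / √2) * (Real.cos ψ ^ m / √2) := by positivity
  rw [mul_mul_mul_comm]
  constructor
  · intro h; exact neg_of_mul_neg_right h hp.le
  · intro h; exact mul_neg_of_pos_of_neg hp h

/-- A sign change can be required to be of definite size `η` at a small cost in probability. -/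
lemma exists_robust {Ω : Type*} [MeasurableSpace Ω] {P : Measure Ω} [IsProbabilityMeasure P]
    {X Y : Ω → ℝ} {p κ : ℝ} (hκ : 0 < κ) (h : p ≤ P.real {ω | X ω * Y ω < 0}) :
    ∃ η > 0, ∀ η' ≤ η, p - κ ≤ P.real {ω | X ω * Y ω < 0 ∧ η' < |X ω| ∧ η' < |Y ω|} := by
  have hmono : Monotone fun j : ℕ =>
      {ω | X ω * Y ω < 0 ∧ 1 / ((j : ℝ) + 1) < |X ω| ∧ 1 / ((j : ℝ) + 1) < |Y ω|} := by
    intro i j hij ω hω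
    have : 1 / ((j : ℝ) + 1) ≤ 1 / ((i : ℝ) + 1) := Nat.one_div_le_one_div hij
    exact ⟨hω.1, this.trans_lt hω.2.1, this.trans_lt hω.2.2⟩
  have hU : (⋃ j : ℕ, {ω | X ω * Y ω < 0 ∧ 1 / ((j : ℝ) + 1) < |X ω| ∧
      1 / ((j : ℝ) + 1) < |Y ω|}) = {ω | X ω * Y ω < 0} := by
    ext ω
    simp only [Set.mem_iUnion, Set.mem_ofPred_eq]
    refine ⟨fun ⟨j, hj⟩ => hj.1, fun hω => ?_⟩
    have hx : 0 < min |X ω| |Y ω| := by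
      refine lt_min (abs_pos.2 ?_) (abs_pos.2 ?_) <;> rintro h0 <;> simp [h0] at hω
    obtain ⟨j, hj⟩ := exists_nat_one_div_lt hx
    exact ⟨j, hω, lt_min_iff.1 hj⟩
  have ht := tendsto_measure_iUnion_atTop (μ := P) hmono
  rw [hU] at ht
  have ht' := (ENNReal.tendsto_toReal (measure_ne_top P _)).comp ht
  have hlt : p - κ < P.real {ω | X ω * Y ω < 0} := by linarith
  obtain ⟨j, hj⟩ := (ht'.eventually (lt_mem_nhds hlt)).exists
  refine ⟨1 / ((j : ℝ) + 1), by positivity, fun η' hη' => hj.le.trans ?_⟩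
  exact measureReal_mono fun ω hω => ⟨hω.1, hη'.trans_lt hω.2.1, hη'.trans_lt hω.2.2⟩

/-! ### The grid of angles -/

/-- If `cos ^ m δ = cos x` with `δ` and `x` small, then `x / δ` is at least about `√m`. -/
lemma angle_bound {m : ℕ} {δ x : ℝ} (hδ : 0 < δ) (hδ1 : δ ≤ 1) (hx : 0 < x) (hx1 : x < 1)
    (h : Real.cos δ ^ m = Real.cos x) :
    (m : ℝ) * (1 - δ ^ 2) * (1 - x ^ 2 / 2) ≤ (x / δ) ^ 2 := by
  set y := δ ^ 2 * (1 - δ ^ 2) / 2 with hy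
  have hδ2 : δ ^ 2 ≤ 1 := by nlinarith
  have hy0 : 0 ≤ y := by rw [hy]; have : 0 ≤ 1 - δ ^ 2 := by linarith
                         positivity
  have hcos : Real.cos δ ≤ 1 - y := by
    have := (abs_le.1 (Real.cos_bound (x := δ) (by rw [abs_of_pos hδ]; exact hδ1))).2
    rw [abs_of_pos hδ] at this
    rw [hy]
    nlinarith [pow_pos hδ 4]
  have hc0 : 0 ≤ Real.cos δ :=
    Real.cos_nonneg_of_mem_Icc ⟨by linarith [Real.pi_gt_three], by linarith [Real.pi_gt_three]⟩
  have h1 : Real.cos x ≤ Real.exp (-(m * y)) := by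
    rw [← h, show -((m : ℝ) * y) = m * (-y) by ring, Real.exp_nat_mul]
    refine pow_le_pow_left₀ hc0 (hcos.trans ?_) m
    linarith [Real.add_one_le_exp (-y)]
  have h2 : 1 - x ^ 2 / 2 ≤ Real.cos x := Real.one_sub_sq_div_two_le_cos
  have hmy : 0 ≤ (m : ℝ) * y := by positivity
  have h3 : (1 - x ^ 2 / 2) * (1 + m * y) ≤ 1 := by
    calc (1 - x ^ 2 / 2) * (1 + m * y) ≤ Real.exp (-(m * y)) * Real.exp (m * y) := by
          refine mul_le_mul (h2.trans h1) ?_ (by positivity) (by positivity)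
          linarith [Real.add_one_le_exp ((m : ℝ) * y)]
      _ = 1 := by rw [← Real.exp_add]; simp
  rw [div_pow, le_div_iff₀ (by positivity)]
  rw [hy] at h3
  nlinarith

/-- The choice of the grid: a step `δ` at which the correlation `cos ^ m δ` equals `cos (π / N)`,
so that the `L` steps fitting into `[0, π/2)` give about `√m / 2` expected sign changes. -/
lemma exists_grid {m : ℕ} (hm : 1 ≤ m) {κ : ℝ} (hκ : 0 < κ) :
    ∃ (N L : ℕ) (δ : ℝ), 2 ≤ N ∧ 0 < δ ∧ L * δ < Real.pi / 2 ∧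
      Real.cos δ ^ m = Real.cos (Real.pi / N) ∧ √m - κ ≤ 2 * L / N := by
  have hxt : Filter.Tendsto (fun N : ℕ => Real.pi / N) Filter.atTop (nhds 0) :=
    tendsto_const_div_atTop_nhds_zero_nat _
  set D : ℝ → ℝ := fun x => Real.arccos (Real.cos x ^ ((1 : ℝ) / m)) with hD
  have hDc : ContinuousAt D 0 := by
    apply Real.continuous_arccos.continuousAt.comp
    exact (Real.continuous_cos.continuousAt).rpow_const (Or.inl (by simp))
  have hDt : Filter.Tendsto (fun N : ℕ => D (Real.pi / N)) Filter.atTop (nhds 0) := by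
    have := hDc.tendsto.comp hxt
    simpa [hD, Function.comp_def] using this
  have hlim : Filter.Tendsto (fun N : ℕ => √((m : ℝ) * (1 - D (Real.pi / N) ^ 2) *
      (1 - (Real.pi / N) ^ 2 / 2)) - 2 / N) Filter.atTop (nhds √m) := by
    have h1 : Filter.Tendsto (fun N : ℕ => (2 : ℝ) / N) Filter.atTop (nhds 0) :=
      tendsto_const_div_atTop_nhds_zero_nat _
    have := ((((hDt.pow 2).const_sub 1).const_mul (m : ℝ)).mul
      (((hxt.pow 2).div_const 2).const_sub 1)).sqrt.sub h1
    simpa using this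
  have ev1 := hlim.eventually (lt_mem_nhds (sub_lt_self √(m : ℝ) hκ))
  have ev2 := hDt.eventually (gt_mem_nhds (zero_lt_one' ℝ))
  have ev3 := hxt.eventually (gt_mem_nhds (zero_lt_one' ℝ))
  obtain ⟨N, h1, h2, h3, hN⟩ :=
    (ev1.and (ev2.and (ev3.and (Filter.eventually_ge_atTop 2)))).exists
  set x := Real.pi / (N : ℝ) with hx
  set δ := D x with hδ
  have hN0 : (0 : ℝ) < N := by positivity
  have hx0 : 0 < x := by positivity
  have hcx0 : 0 < Real.cos x := Real.cos_pos_of_mem_Ioo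
    ⟨by linarith [Real.pi_gt_three], by linarith [Real.pi_gt_three]⟩
  have hcx1 : Real.cos x < 1 := by
    rw [← Real.cos_zero]
    exact Real.cos_lt_cos_of_nonneg_of_le_pi le_rfl (by linarith [Real.pi_gt_three]) hx0
  have hm0 : (0 : ℝ) < m := by exact_mod_cast hm
  have hrt1 : Real.cos x ^ ((1 : ℝ) / m) < 1 :=
    Real.rpow_lt_one hcx0.le hcx1 (by positivity)
  have hrt0 : 0 < Real.cos x ^ ((1 : ℝ) / m) := Real.rpow_pos_of_pos hcx0 _
  have hδ0 : 0 < δ := Real.arccos_pos.2 hrt1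
  have hcos : Real.cos δ ^ m = Real.cos x := by
    rw [hδ, hD]
    simp only
    rw [Real.cos_arccos (by linarith) hrt1.le, ← Real.rpow_natCast, ← Real.rpow_mul hcx0.le]
    simp [hm0.ne']
  have hb := angle_bound hδ0 h2.le hx0 h3 hcos
  have hb' := Real.sqrt_le_sqrt hb
  rw [Real.sqrt_sq (by positivity)] at hb'
  refine ⟨N, ⌈Real.pi / (2 * δ)⌉₊ - 1, δ, hN, hδ0, ?_, hcos, ?_⟩
  · have hpos : 0 < ⌈Real.pi / (2 * δ)⌉₊ := Nat.ceil_pos.2 (by positivity)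
    have := Nat.ceil_lt_add_one (a := Real.pi / (2 * δ)) (by positivity)
    rw [Nat.cast_sub hpos, Nat.cast_one]
    have h4 : (⌈Real.pi / (2 * δ)⌉₊ : ℝ) - 1 < Real.pi / (2 * δ) := by linarith
    calc ((⌈Real.pi / (2 * δ)⌉₊ : ℝ) - 1) * δ < Real.pi / (2 * δ) * δ := by gcongr
      _ = Real.pi / 2 := by field_simp
  · have hpos : 0 < ⌈Real.pi / (2 * δ)⌉₊ := Nat.ceil_pos.2 (by positivity)
    rw [Nat.cast_sub hpos, Nat.cast_one]
    have h4 : Real.pi / (2 * δ) ≤ (⌈Real.pi / (2 * δ)⌉₊ : ℝ) := Nat.le_ceil _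
    have h5 : x / δ - 2 / N = 2 * (Real.pi / (2 * δ) - 1) / N := by
      rw [hx]; field_simp
    calc √(m : ℝ) - κ ≤ x / δ - 2 / N := by linarith
      _ = 2 * (Real.pi / (2 * δ) - 1) / N := h5
      _ ≤ _ := by gcongr

/-! ### Finiteness, measurability and integrability of the zero count -/

/-- The number of zeros of a continuous family of functions with finite zero sets is measurable in
the parameter: having `k` zeros of norm at most `M` with mutual distances at least `1 / M` is a
closed condition, by compactness of the set of such configurations. -/
lemma measurable_ncard_zeros {E : Type*} [TopologicalSpace E] [MeasurableSpace E]
    [OpensMeasurableSpace E] {F : E × ℂ → ℂ} (hF : Continuous F)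
    (hfin : ∀ c, {z | F (c, z) = 0}.Finite) :
    Measurable fun c => {z | F (c, z) = 0}.ncard := by
  refine measurable_of_Ici fun k => ?_
  let K : ℕ → Set (Fin k → ℂ) := fun M =>
    Metric.closedBall 0 M ∩ {z | ∀ i j, i ≠ j → 1 ≤ M * dist (z i) (z j)}
  have hK : ∀ M, CompactSpace (K M) := by
    intro M
    rw [← isCompact_iff_compactSpace]
    refine (isCompact_closedBall _ _).inter_right ?_
    have : {z : Fin k → ℂ | ∀ i j, i ≠ j → 1 ≤ M * dist (z i) (z j)} =
        ⋂ i, ⋂ j, ⋂ (_ : i ≠ j), {z : Fin k → ℂ | 1 ≤ M * dist (z i) (z j)} := by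
      ext z; simp
    rw [this]
    exact isClosed_iInter fun i => isClosed_iInter fun j => isClosed_iInter fun _ =>
      isClosed_le continuous_const (by fun_prop)
  have heq : (fun c => {z | F (c, z) = 0}.ncard) ⁻¹' Set.Ici k =
      ⋃ M : ℕ, Prod.fst '' {p : E × K M | ∀ i, F (p.1, p.2.1 i) = 0} := by
    ext c
    simp only [Set.mem_preimage, Set.mem_Ici, Set.mem_iUnion, Set.mem_image]
    constructor
    · intro hk
      rw [Set.ncard_eq_toFinset_card _ (hfin c)] at hk
      obtain ⟨T, hT, hTk⟩ := Finset.exists_subset_card_eq hk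
      let e : Fin k ≃ T := (T.equivFinOfCardEq hTk).symm
      let z : Fin k → ℂ := fun i => (e i : ℂ)
      have hz : Function.Injective z := Subtype.val_injective.comp e.injective
      have hz0 : ∀ i, F (c, z i) = 0 := fun i => by simpa using hT (e i).2
      have ev1 : ∀ᶠ M : ℕ in Filter.atTop, ‖z‖ ≤ M :=
        tendsto_natCast_atTop_atTop.eventually_ge_atTop _
      have ev2 : ∀ᶠ M : ℕ in Filter.atTop, ∀ i j, i ≠ j → 1 ≤ (M : ℝ) * dist (z i) (z j) := by
        refine Filter.eventually_all.2 fun i => Filter.eventually_all.2 fun j => ?_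
        by_cases hij : i = j
        · exact Filter.Eventually.of_forall fun M h => absurd hij h
        · have hd : 0 < dist (z i) (z j) := dist_pos.2 fun h => hij (hz h)
          filter_upwards [(tendsto_natCast_atTop_atTop (R := ℝ)).atTop_mul_const hd
            |>.eventually_ge_atTop 1] with M hM _ using hM
      obtain ⟨M, hM1, hM2⟩ := (ev1.and ev2).exists
      exact ⟨M, (c, ⟨z, by simpa using hM1, hM2⟩), hz0, rfl⟩
    · rintro ⟨M, ⟨c', z⟩, hz0, rfl⟩
      have hinj : Function.Injective z.1 := by
        intro i j hij
        by_contra hne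
        have := z.2.2 i j hne
        simp [hij] at this
        linarith
      rw [Set.ncard_eq_toFinset_card _ (hfin _)]
      have := Finset.card_le_card_of_injOn (s := Finset.univ) (t := (hfin c').toFinset) z.1
        (fun i _ => by simpa using hz0 i) hinj.injOn
      simpa using this
  rw [heq]
  refine MeasurableSet.iUnion fun M => IsClosed.measurableSet ?_
  have := hK M
  refine isClosedMap_fst_of_compactSpace _ ?_
  have h2 : {p : E × K M | ∀ i, F (p.1, p.2.1 i) = 0} =
      ⋂ i, {p : E × K M | F (p.1, p.2.1 i) = 0} := by ext; simp
  rw [h2]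
  exact isClosed_iInter fun i => isClosed_eq (hF.comp (continuous_fst.prodMk
    ((continuous_apply i).comp (continuous_subtype_val.comp continuous_snd)))) continuous_const

/-- The zero set of `ε z ^ n + q(z) + conj (q(z))`. -/
abbrev zeroSet {m : ℕ} (n : ℕ) (ε : ℝ) (c : Fin (m + 1) → ℝ × ℝ) : Set ℂ :=
  {z : ℂ | (ε : ℂ) * z ^ n +
    (∑ k : Fin (m + 1), (((c k).1 : ℂ) + ((c k).2 : ℂ) * Complex.I) * z ^ (k : ℕ)) +
    (starRingEnd ℂ)
      (∑ k : Fin (m + 1), (((c k).1 : ℂ) + ((c k).2 : ℂ) * Complex.I) * z ^ (k : ℕ)) = 0}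

lemma mem_zeroSet_ray {m n : ℕ} {ε : ℝ} {c : Fin (m + 1) → ℝ × ℝ} {ζ : ℂ} {r : ℝ} :
    (r : ℂ) * ζ ∈ zeroSet n ε c ↔ (ε : ℂ) * ((r : ℂ) * ζ) ^ n + (ray ζ r c : ℂ) = 0 := by
  have h : ((∑ k : Fin (m + 1), (((c k).1 : ℂ) + ((c k).2 : ℂ) * Complex.I) *
      ((r : ℂ) * ζ) ^ (k : ℕ)).re) * 2 = ray ζ r c := by
    rw [Complex.re_sum, ray, Finset.sum_mul]
    refine Finset.sum_congr rfl fun k _ => ?_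
    rw [mul_pow, ← Complex.ofReal_pow]
    simp only [Complex.mul_re, Complex.add_re, Complex.ofReal_re, Complex.ofReal_im, Complex.I_re,
      Complex.I_im, Complex.add_im, Complex.mul_im]
    ring
  rw [Set.mem_ofPred_eq, add_assoc, Complex.add_conj, ← h]
  push_cast
  rw [mul_comm (2 : ℂ)]

/-- The restriction of `ε z ^ n + q(z) + conj (q(z))` to the ray through `ζ`, as a polynomial in
the radius. -/
noncomputable def rayPoly {m : ℕ} (n : ℕ) (ε : ℝ) (c : Fin (m + 1) → ℝ × ℝ) (ζ : ℂ) :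
    Polynomial ℂ :=
  Polynomial.C ((ε : ℂ) * ζ ^ n) * Polynomial.X ^ n +
    ∑ k : Fin (m + 1), Polynomial.C
      ((2 * ((ζ ^ (k : ℕ)).re * (c k).1 - (ζ ^ (k : ℕ)).im * (c k).2) : ℝ) : ℂ) *
      Polynomial.X ^ (k : ℕ)

lemma eval_rayPoly {m : ℕ} (n : ℕ) (ε : ℝ) (c : Fin (m + 1) → ℝ × ℝ) (ζ : ℂ) (r : ℝ) :
    (rayPoly n ε c ζ).eval (r : ℂ) = (ε : ℂ) * ((r : ℂ) * ζ) ^ n + (ray ζ r c : ℂ) := by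
  simp only [rayPoly, ray, Polynomial.eval_add, Polynomial.eval_finsetSum, Polynomial.eval_mul,
    Polynomial.eval_C, Polynomial.eval_pow, Polynomial.eval_X]
  push_cast
  congr 1
  · ring
  · exact Finset.sum_congr rfl fun k _ => by ring

lemma natDegree_rayPoly_le {m n : ℕ} (hmn : m < n) (ε : ℝ) (c : Fin (m + 1) → ℝ × ℝ) (ζ : ℂ) :
    (rayPoly n ε c ζ).natDegree ≤ n := by
  refine Polynomial.natDegree_add_le_of_degree_le (Polynomial.natDegree_C_mul_X_pow_le _ _) ?_
  refine Polynomial.natDegree_sum_le_of_forall_le _ _ fun k _ => ?_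
  exact (Polynomial.natDegree_C_mul_X_pow_le _ _).trans (by omega)

lemma rayPoly_ne_zero {m n : ℕ} (hmn : m < n) {ε : ℝ} (hε : 0 < ε) (c : Fin (m + 1) → ℝ × ℝ)
    {ζ : ℂ} (hζ : ζ ≠ 0) : rayPoly n ε c ζ ≠ 0 := by
  intro h
  have h1 := congrArg (fun p => Polynomial.coeff p n) h
  simp only [rayPoly, Polynomial.coeff_add, Polynomial.coeff_C_mul_X_pow,
    Polynomial.finsetSum_coeff, if_true, Polynomial.coeff_zero] at h1
  rw [Finset.sum_eq_zero, add_zero] at h1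
  · exact mul_ne_zero (by exact_mod_cast hε.ne') (pow_ne_zero _ hζ) h1
  · intro k _
    rw [if_neg]
    omega

/-- Zeros lie on the `2n` rays through the `2n`-th roots of unity, with at most `n` on each. -/
lemma zeroSet_subset {m n : ℕ} (hmn : m < n) {ε : ℝ} (hε : 0 < ε) (c : Fin (m + 1) → ℝ × ℝ) :
    zeroSet n ε c ⊆ (((Polynomial.nthRootsFinset (2 * n) (1 : ℂ)).biUnion fun ζ =>
      (rayPoly n ε c ζ).roots.toFinset.image (· * ζ) : Finset ℂ) : Set ℂ) := by
  have hn : 0 < 2 * n := by omega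
  intro z hz
  obtain ⟨r, ζ, hζ, rfl⟩ : ∃ (r : ℝ) (ζ : ℂ), ζ ^ (2 * n) = 1 ∧ (r : ℂ) * ζ = z := by
    rcases eq_or_ne z 0 with rfl | h0
    · exact ⟨0, 1, by simp, by simp⟩
    · have hz0 : (‖z‖ : ℂ) ≠ 0 := by exact_mod_cast norm_ne_zero_iff.2 h0
      refine ⟨‖z‖, z / ‖z‖, ?_, mul_div_cancel₀ _ hz0⟩
      -- `z ^ n` is real, hence equal to its conjugate, and so `z ^ (2 n) = ‖z‖ ^ (2 n)`.
      have hreal : (starRingEnd ℂ) (z ^ n) = z ^ n := by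
        have hz' : (ε : ℂ) * z ^ n + _ + _ = 0 := hz
        rw [add_assoc, Complex.add_conj] at hz'
        have him := congrArg Complex.im hz'
        rw [Complex.conj_eq_iff_im]
        rw [Complex.add_im, Complex.ofReal_im, Complex.im_ofReal_mul] at him
        have : ε * (z ^ n).im = 0 := by simpa using him
        exact (mul_eq_zero.1 this).resolve_left hε.ne'
      have hsq : z ^ (2 * n) = (‖z‖ : ℂ) ^ (2 * n) := by
        calc z ^ (2 * n) = z ^ n * (starRingEnd ℂ) (z ^ n) := by rw [hreal]; ring
          _ = (z * (starRingEnd ℂ) z) ^ n := by rw [map_pow, mul_pow]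
          _ = _ := by rw [Complex.mul_conj, Complex.normSq_eq_norm_sq, pow_mul]; push_cast; rfl
      rw [div_pow, hsq, div_self (pow_ne_zero _ hz0)]
  have hζ0 : ζ ≠ 0 := by
    rintro rfl
    rw [zero_pow hn.ne'] at hζ
    exact zero_ne_one hζ
  simp only [Finset.coe_biUnion, Set.mem_iUnion, Finset.coe_image, Set.mem_image]
  refine ⟨ζ, (Polynomial.mem_nthRootsFinset hn 1).2 hζ, r, ?_, rfl⟩
  simp only [Finset.mem_coe, Multiset.mem_toFinset]
  rw [Polynomial.mem_roots (rayPoly_ne_zero hmn hε c hζ0), Polynomial.IsRoot, eval_rayPoly]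
  exact mem_zeroSet_ray.1 hz

lemma zeroSet_finite {m n : ℕ} (hmn : m < n) {ε : ℝ} (hε : 0 < ε) (c : Fin (m + 1) → ℝ × ℝ) :
    (zeroSet n ε c).Finite :=
  (Finset.finite_toSet _).subset (zeroSet_subset hmn hε c)

lemma card_roots_of_unity {n : ℕ} (hn : 0 < n) :
    (Polynomial.nthRootsFinset (2 * n) (1 : ℂ)).card = 2 * n :=
  (Complex.isPrimitiveRoot_exp (2 * n) (by omega)).card_nthRootsFinset

lemma ncard_zeroSet_le {m n : ℕ} (hmn : m < n) {ε : ℝ} (hε : 0 < ε)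
    (c : Fin (m + 1) → ℝ × ℝ) : (zeroSet n ε c).ncard ≤ 2 * n * n := by
  refine (Set.ncard_le_ncard (zeroSet_subset hmn hε c) (Finset.finite_toSet _)).trans ?_
  rw [Set.ncard_coe_finset]
  have h := Finset.card_biUnion_le_card_mul (Polynomial.nthRootsFinset (2 * n) (1 : ℂ))
    (fun ζ => (rayPoly n ε c ζ).roots.toFinset.image (· * ζ)) n fun ζ _ => ?_
  · rwa [card_roots_of_unity (by omega)] at h
  exact Finset.card_image_le.trans ((Multiset.toFinset_card_le _).trans
    ((Polynomial.card_roots' _).trans (natDegree_rayPoly_le hmn ε c ζ)))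

lemma integrable_ncard {m n : ℕ} (hmn : m < n) {ε : ℝ} (hε : 0 < ε) :
    Integrable (fun c : Fin (m + 1) → ℝ × ℝ => ((zeroSet n ε c).ncard : ℝ)) (kostlan m) := by
  have hmeas : Measurable fun c : Fin (m + 1) → ℝ × ℝ => (zeroSet n ε c).ncard :=
    measurable_ncard_zeros (F := fun p : (Fin (m + 1) → ℝ × ℝ) × ℂ => (ε : ℂ) * p.2 ^ n +
      (∑ k : Fin (m + 1), (((p.1 k).1 : ℂ) + ((p.1 k).2 : ℂ) * Complex.I) * p.2 ^ (k : ℕ)) +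
      (starRingEnd ℂ) (∑ k : Fin (m + 1),
        (((p.1 k).1 : ℂ) + ((p.1 k).2 : ℂ) * Complex.I) * p.2 ^ (k : ℕ)))
      (by fun_prop) (fun c => zeroSet_finite hmn hε c)
  have hmeas' : Measurable fun c : Fin (m + 1) → ℝ × ℝ => ((zeroSet n ε c).ncard : ℝ) :=
    measurable_from_nat.comp hmeas
  refine Integrable.of_bound hmeas'.aestronglyMeasurable ((2 * n * n : ℕ) : ℝ) ?_
  refine Filter.Eventually.of_forall fun c => ?_
  rw [Real.norm_of_nonneg (Nat.cast_nonneg _)]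
  exact_mod_cast ncard_zeroSet_le hmn hε c

/-! ### Sign changes produce zeros -/

lemma mul_neg_of_perturb {x y e f η : ℝ} (he : |e| ≤ η) (hf : |f| ≤ η) (hx : η < |x|)
    (hy : η < |y|) (h : x * y < 0) : (e + x) * (f + y) < 0 := by
  rw [abs_le] at he hf
  rcases mul_neg_iff.1 h with ⟨h1, h2⟩ | ⟨h1, h2⟩
  · rw [abs_of_pos h1] at hx
    rw [abs_of_neg h2] at hy
    exact mul_neg_of_pos_of_neg (by linarith) (by linarith)
  · rw [abs_of_neg h1] at hx
    rw [abs_of_pos h2] at hy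
    exact mul_neg_of_neg_of_pos (by linarith) (by linarith)

lemma exists_zero_of_mul_neg {f : ℝ → ℝ} (hf : Continuous f) {a b : ℝ} (hab : a < b)
    (h : f a * f b < 0) : ∃ r ∈ Set.Ioo a b, f r = 0 := by
  rcases mul_neg_iff.1 h with ⟨h1, h2⟩ | ⟨h1, h2⟩
  · exact intermediate_value_Ioo' hab.le hf.continuousOn ⟨h2, h1⟩
  · exact intermediate_value_Ioo hab.le hf.continuousOn ⟨h1, h2⟩

/-- The event that `2 Re q` changes sign, with values larger than `η` in absolute value, between
the radii `r` and `s` on the ray through `ζ`. -/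
def robust {m : ℕ} (η : ℝ) (ζ : ℂ) (r s : ℝ) : Set (Fin (m + 1) → ℝ × ℝ) :=
  {c | ray ζ r c * ray ζ s c < 0 ∧ η < |ray ζ r c| ∧ η < |ray ζ s c|}

lemma measurableSet_robust {m : ℕ} (η : ℝ) (ζ : ℂ) (r s : ℝ) :
    MeasurableSet (robust (m := m) η ζ r s) := by
  have hr := measurable_ray (m := m) ζ r
  have hs := measurable_ray (m := m) ζ s
  exact (measurableSet_lt (hr.mul hs) measurable_const).inter
    ((measurableSet_lt measurable_const hr.abs).inter (measurableSet_lt measurable_const hs.abs))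

lemma exists_zero_of_robust {m n : ℕ} {ε η : ℝ} (hε : 0 < ε)
    {c : Fin (m + 1) → ℝ × ℝ} {ζ : ℂ} (hζ : ζ ^ (2 * n) = 1) {a b : ℝ} (ha : 0 ≤ a) (hab : a < b)
    (hηa : ε * a ^ n ≤ η) (hηb : ε * b ^ n ≤ η) (h : c ∈ robust η ζ a b) :
    ∃ r ∈ Set.Ioo a b, (r : ℂ) * ζ ∈ zeroSet n ε c := by
  obtain ⟨s, hs, hs'⟩ : ∃ s : ℝ, ζ ^ n = (s : ℂ) ∧ |s| = 1 := by
    rw [mul_comm, pow_mul, sq_eq_one_iff] at hζ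
    rcases hζ with h | h
    · exact ⟨1, by simpa using h, by simp⟩
    · exact ⟨-1, by simpa using h, by simp⟩
  have hb : 0 ≤ b := ha.trans hab.le
  have hc : Continuous fun r : ℝ => ε * s * r ^ n + ray ζ r c := by
    unfold ray; fun_prop
  have hpert : ∀ t : ℝ, 0 ≤ t → ε * t ^ n ≤ η → |ε * s * t ^ n| ≤ η := by
    intro t ht h
    rwa [abs_mul, abs_mul, hs', abs_of_pos hε, abs_of_nonneg (by positivity), mul_one]
  obtain ⟨r, hr, hr0⟩ := exists_zero_of_mul_neg hc hab
    (mul_neg_of_perturb (hpert a ha hηa) (hpert b hb hηb) h.2.1 h.2.2 h.1)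
  refine ⟨r, hr, mem_zeroSet_ray.2 ?_⟩
  rw [mul_pow, hs]
  have := congrArg (fun x : ℝ => (x : ℂ)) hr0
  push_cast at this
  linear_combination this

open Classical in
/-- Sign changes along a grid of radii on the `2n` rays produce distinct zeros. -/
lemma card_le_ncard {m n : ℕ} (hmn : m < n) {ε η : ℝ} (hε : 0 < ε)
    (c : Fin (m + 1) → ℝ × ℝ) {L : ℕ} {ρ : ℕ → ℝ} (hρ0 : ∀ i ≤ L, 0 ≤ ρ i)
    (hρ : ∀ i j, i < j → j ≤ L → ρ i < ρ j) (hη : ∀ i ≤ L, ε * ρ i ^ n ≤ η) :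
    ((Polynomial.nthRootsFinset (2 * n) (1 : ℂ) ×ˢ Finset.range L).filter
      fun p => c ∈ robust η p.1 (ρ p.2) (ρ (p.2 + 1))).card ≤ (zeroSet n ε c).ncard := by
  have hn : 0 < 2 * n := by omega
  set S := (Polynomial.nthRootsFinset (2 * n) (1 : ℂ) ×ˢ Finset.range L).filter
      fun p => c ∈ robust η p.1 (ρ p.2) (ρ (p.2 + 1)) with hS
  have hSm : ∀ p ∈ S, p.1 ^ (2 * n) = 1 ∧ p.2 < L ∧ c ∈ robust η p.1 (ρ p.2) (ρ (p.2 + 1)) := by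
    intro p hp
    rw [hS, Finset.mem_filter, Finset.mem_product, Polynomial.mem_nthRootsFinset hn,
      Finset.mem_range] at hp
    exact ⟨hp.1.1, hp.1.2, hp.2⟩
  have hex : ∀ p : ℂ × ℕ, ∃ r : ℝ, p ∈ S →
      r ∈ Set.Ioo (ρ p.2) (ρ (p.2 + 1)) ∧ (r : ℂ) * p.1 ∈ zeroSet n ε c := by
    intro p
    by_cases hp : p ∈ S
    · obtain ⟨h1, h2, h3⟩ := hSm p hp
      obtain ⟨r, hr⟩ := exists_zero_of_robust hε h1 (hρ0 _ h2.le)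
        (hρ _ _ (Nat.lt_succ_self _) h2) (hη _ h2.le) (hη _ h2) h3
      exact ⟨r, fun _ => hr⟩
    · exact ⟨0, fun h => absurd h hp⟩
  choose r hr using hex
  rw [Set.ncard_eq_toFinset_card _ (zeroSet_finite hmn hε c)]
  refine Finset.card_le_card_of_injOn (fun p => (r p : ℂ) * p.1)
    (fun p hp => by simpa only [Set.Finite.coe_toFinset] using (hr p hp).2) ?_
  intro p hp p' hp' heq
  simp only at heq
  have hpos : ∀ p ∈ S, 0 < r p := fun p hp =>
    (hρ0 _ (hSm p hp).2.1.le).trans_lt (hr p hp).1.1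
  have hnorm : ∀ p ∈ S, ‖(r p : ℂ) * p.1‖ = r p := by
    intro p hp
    rw [norm_mul, Complex.norm_eq_one_of_pow_eq_one (hSm p hp).1 hn.ne', mul_one,
      Complex.norm_of_nonneg (hpos p hp).le]
  have hrr : r p = r p' := by rw [← hnorm p hp, heq, hnorm p' hp']
  have h1 : p.1 = p'.1 := by
    rw [hrr] at heq
    exact mul_left_cancel₀ (by exact_mod_cast (hpos p' hp').ne') heq
  -- Distinct intervals of the grid are disjoint.
  have hle : ∀ p ∈ S, ∀ p' ∈ S, r p = r p' → p.2 ≤ p'.2 := by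
    intro p hp p' hp' hrr
    by_contra! hlt
    have hmono : ρ (p'.2 + 1) ≤ ρ p.2 := by
      rcases Nat.lt_or_eq_of_le (Nat.succ_le_of_lt hlt) with h | h
      · exact (hρ _ _ h (hSm p hp).2.1.le).le
      · exact (congrArg ρ h).le
    have := (hr p hp).1.1
    have := (hr p' hp').1.2
    linarith
  exact Prod.ext h1 (le_antisymm (hle p hp p' hp' hrr) (hle p' hp' p hp hrr.symm))

/-- The expected number of zeros dominates the expected number of robust sign changes. -/
lemma le_integral_ncard {m n : ℕ} (hmn : m < n) {ε η : ℝ} (hε : 0 < ε) {L : ℕ} {ρ : ℕ → ℝ}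
    (hρ0 : ∀ i ≤ L, 0 ≤ ρ i) (hρ : ∀ i j, i < j → j ≤ L → ρ i < ρ j)
    (hη : ∀ i ≤ L, ε * ρ i ^ n ≤ η) :
    ∑ p ∈ Polynomial.nthRootsFinset (2 * n) (1 : ℂ) ×ˢ Finset.range L,
      (kostlan m).real (robust η p.1 (ρ p.2) (ρ (p.2 + 1))) ≤
      ∫ c, ((zeroSet n ε c).ncard : ℝ) ∂(kostlan m) := by
  classical
  have hint : ∀ p ∈ Polynomial.nthRootsFinset (2 * n) (1 : ℂ) ×ˢ Finset.range L,
      Integrable ((robust η p.1 (ρ p.2) (ρ (p.2 + 1))).indicator (1 : (Fin (m + 1) → ℝ × ℝ) → ℝ)) (kostlan m) :=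
    fun p _ => (integrable_const (1 : ℝ)).indicator (measurableSet_robust _ _ _ _)
  calc _ = ∫ c, ∑ p ∈ Polynomial.nthRootsFinset (2 * n) (1 : ℂ) ×ˢ Finset.range L,
        (robust η p.1 (ρ p.2) (ρ (p.2 + 1))).indicator (1 : (Fin (m + 1) → ℝ × ℝ) → ℝ) c ∂(kostlan m) := by
        rw [integral_finsetSum _ hint]
        exact Finset.sum_congr rfl fun p _ =>
          (integral_indicator_one (measurableSet_robust _ _ _ _)).symm
    _ ≤ _ := by
        refine integral_mono (integrable_finsetSum _ hint) (integrable_ncard hmn hε) fun c => ?_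
        have h := card_le_ncard hmn hε c hρ0 hρ hη
        simp only [Set.indicator_apply, Pi.one_apply]
        rw [Finset.sum_boole]
        exact_mod_cast h

/-- Let `n > m ≥ 1`, let `ν` be the product of `N(0,(1/2)C(m,k)) ⊗ N(0,(1/2)C(m,k))`
governing coefficients `((a_k,b_k))_k`, and `q(z) = Σ_k (a_k + i b_k) z^k`. For every
`ε₀ > 0` there exists `ε₁ > 0` such that for all `0 < ε ≤ ε₁`, the expected number of zeros
of `ε z^n + q(z) + conj(q(z))` is at least `n(√m − ε₀)`. -/
theorem expected_total_zeros (n m : ℕ) (hm : 1 ≤ m) (hmn : m < n)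
    (ε₀ : ℝ) (hε₀ : 0 < ε₀) :
    ∃ ε₁ : ℝ, 0 < ε₁ ∧ ∀ ε : ℝ, 0 < ε → ε ≤ ε₁ →
      (n : ℝ) * (Real.sqrt m - ε₀) ≤
        ∫ c : Fin (m + 1) → ℝ × ℝ,
          (({z : ℂ | (ε : ℂ) * z ^ n +
              (∑ k : Fin (m + 1), (((c k).1 : ℂ) + ((c k).2 : ℂ) * Complex.I) * z ^ (k : ℕ)) +
              (starRingEnd ℂ)
                (∑ k : Fin (m + 1), (((c k).1 : ℂ) + ((c k).2 : ℂ) * Complex.I) * z ^ (k : ℕ))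
              = 0}.ncard : ℝ))
        ∂(Measure.pi fun k : Fin (m + 1) =>
            (gaussianReal 0 ((m.choose k : ℝ≥0) / 2)).prod
              (gaussianReal 0 ((m.choose k : ℝ≥0) / 2))) := by
  obtain ⟨N, L, δ, hN, hδ, hL, hcos, hgrid⟩ := exists_grid hm (half_pos hε₀)
  set ρ : ℕ → ℝ := fun i => Real.tan (i * δ) with hρdef
  set S := Polynomial.nthRootsFinset (2 * n) (1 : ℂ) ×ˢ Finset.range L with hS
  have hn : 0 < 2 * n := by omega
  have hang : ∀ i ≤ L, (i : ℝ) * δ < Real.pi / 2 := by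
    intro i hi
    refine lt_of_le_of_lt ?_ hL
    gcongr
  have hcpos : ∀ i ≤ L, 0 < Real.cos (i * δ) := by
    intro i hi
    have h0 : 0 ≤ (i : ℝ) * δ := by positivity
    exact Real.cos_pos_of_mem_Ioo ⟨by linarith [Real.pi_pos], hang i hi⟩
  have hρ0 : ∀ i ≤ L, 0 ≤ ρ i := fun i hi =>
    Real.tan_nonneg_of_nonneg_of_le_pi_div_two (by positivity) (hang i hi).le
  have hρ : ∀ i j, i < j → j ≤ L → ρ i < ρ j := by
    intro i j hij hj
    refine Real.tan_lt_tan_of_nonneg_of_lt_pi_div_two (by positivity) (hang j hj) ?_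
    gcongr
  -- The loss in probability allowed for each of the `2 n L` sign changes.
  set κ : ℝ := ε₀ / (4 * (L + 1)) with hκ
  have hκ0 : 0 < κ := by positivity
  have hev : ∀ p ∈ S, ∀ᶠ η in nhdsWithin (0 : ℝ) (Set.Ioi 0),
      (1 : ℝ) / N - κ ≤ (kostlan m).real (robust η p.1 (ρ p.2) (ρ (p.2 + 1))) := by
    intro p hp
    rw [hS, Finset.mem_product, Polynomial.mem_nthRootsFinset hn, Finset.mem_range] at hp
    have hsc := ray_sign_change (m := m) hN (Complex.norm_eq_one_of_pow_eq_one hp.1 hn.ne')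
      (hcpos p.2 hp.2.le) (hcpos (p.2 + 1) hp.2)
      (by rw [← hcos]; congr 2; push_cast; ring)
    obtain ⟨η, hη, h⟩ := exists_robust hκ0 hsc
    filter_upwards [Ioc_mem_nhdsGT hη] with η' hη'
    exact h η' hη'.2
  obtain ⟨η, hη, hη0⟩ :=
    (((Filter.eventually_all_finset S).2 hev).and self_mem_nhdsWithin).exists
  have hη0 : 0 < η := hη0
  have hM : 0 < (1 + ρ L) ^ n := by have := hρ0 L le_rfl; positivity
  refine ⟨η / (1 + ρ L) ^ n, by positivity, fun ε hε hε1 => ?_⟩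
  have hεη : ∀ i ≤ L, ε * ρ i ^ n ≤ η := by
    intro i hi
    have h1 : ρ i ≤ 1 + ρ L := by
      rcases Nat.lt_or_eq_of_le hi with h | h
      · linarith [hρ i L h le_rfl]
      · rw [h]; linarith
    calc ε * ρ i ^ n ≤ η / (1 + ρ L) ^ n * (1 + ρ L) ^ n :=
          mul_le_mul hε1 (pow_le_pow_left₀ (hρ0 i hi) h1 n)
            (pow_nonneg (hρ0 i hi) n) (by positivity)
      _ = η := div_mul_cancel₀ _ hM.ne'
  refine le_trans ?_ (le_integral_ncard (m := m) hmn hε hρ0 hρ hεη)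
  have hsum := Finset.card_nsmul_le_sum S _ _ hη
  rw [nsmul_eq_mul, hS, Finset.card_product, card_roots_of_unity (by omega),
    Finset.card_range] at hsum
  refine le_trans ?_ hsum
  push_cast
  have hLκ : (L : ℝ) * κ ≤ ε₀ / 4 := by
    rw [hκ]
    have : (L : ℝ) / (L + 1) ≤ 1 := by rw [div_le_one (by positivity)]; linarith
    calc (L : ℝ) * (ε₀ / (4 * (L + 1))) = ε₀ / 4 * (L / (L + 1)) := by field_simp
      _ ≤ ε₀ / 4 * 1 := by gcongr
      _ = ε₀ / 4 := mul_one _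
  calc (n : ℝ) * (√m - ε₀) = n * (√m - ε₀ / 2 - 2 * (ε₀ / 4)) := by ring
    _ ≤ n * (2 * L / N - 2 * (L * κ)) := by gcongr
    _ = 2 * n * L * (1 / N - κ) := by ring
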